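/- arXiv:2301.01034 — 8 statements merged into one kernel-verified Lean document; each statement's English description precedes it below -/
import Mathlib

section
/- Directed colimits in the category of extended metric spaces and nonexpanding maps commute with binary products: let I be a directed poset, (D_i, f_{ij}) and (D'_i, f'_{ij}) directed diagrams of extended metric spaces with nonexpanding connecting maps, and let cocones (c_i : D_i → C) and (c'_i : D'_i → C') of nonexpanding maps each satisfy the Met-colimit conditions (a) and (b). Then the cocone (c_i × c'_i : D_i × D'_i → C × C'), where products carry the supremum (max) extended metric, satisfies the Met-colimit conditions (a) and (b) for the product diagram (D_i × D'_i, f_{ij} × f'_{ij}). -/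
/-!
Both conditions come down to moving two indices to a common upper bound. A point `(z, z')` of
`C × C'` has preimages at two indices, and pushing both along the connecting maps to an upper
bound gives a preimage in the product diagram. For the distances, the point is that the infima in
(b) are taken over antitone families, since connecting maps are nonexpanding, and that over a
directed index set the maximum of two such infima is the infimum of the maxima: if both infima are
`< b`, witnessed at `j` and `k`, then both distances are `< b` at any upper bound of `j` and `k`.
-/


/-- **Directed colimits commute with binary products in `Met`.**
Let `I` be a directed poset, `(D_i, f_{ij})` and `(D'_i, f'_{ij})` directed diagrams of
extended metric spaces with nonexpanding connecting maps, and let `(c_i : D_i → C)` and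
`(c'_i : D'_i → C')` be compatible cocones of nonexpanding maps satisfying the two
`Met`-colimit conditions:
(a) every point of the colimit lies in the image of some cocone map, and
(b) `edist (c_i y) (c_i y') = ⨅_{j ≥ i} edist (f_{ij} y) (f_{ij} y')`.
Then the product cocone `(c_i × c'_i : D_i × D'_i → C × C')`, with products carrying the
supremum (max) extended metric, satisfies conditions (a) and (b) for the product diagram
`(D_i × D'_i, f_{ij} × f'_{ij})`. -/
theorem met_directed_colimit_commutes_with_binary_product
    {I : Type*} [PartialOrder I] [IsDirected I (· ≤ ·)] [Nonempty I]
    (D D' : I → Type*) [∀ i, EMetricSpace (D i)] [∀ i, EMetricSpace (D' i)]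
    (f : ∀ i j, i ≤ j → D i → D j) (f' : ∀ i j, i ≤ j → D' i → D' j)
    (hf_ne : ∀ i j (h : i ≤ j) (x y : D i), edist (f i j h x) (f i j h y) ≤ edist x y)
    (hf'_ne : ∀ i j (h : i ≤ j) (x y : D' i), edist (f' i j h x) (f' i j h y) ≤ edist x y)
    (hf_id : ∀ i (x : D i), f i i le_rfl x = x)
    (hf'_id : ∀ i (x : D' i), f' i i le_rfl x = x)
    (hf_comp : ∀ i j k (hij : i ≤ j) (hjk : j ≤ k) (x : D i),
      f j k hjk (f i j hij x) = f i k (hij.trans hjk) x)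
    (hf'_comp : ∀ i j k (hij : i ≤ j) (hjk : j ≤ k) (x : D' i),
      f' j k hjk (f' i j hij x) = f' i k (hij.trans hjk) x)
    {C C' : Type*} [EMetricSpace C] [EMetricSpace C']
    (c : ∀ i, D i → C) (c' : ∀ i, D' i → C')
    (hc_ne : ∀ i (x y : D i), edist (c i x) (c i y) ≤ edist x y)
    (hc'_ne : ∀ i (x y : D' i), edist (c' i x) (c' i y) ≤ edist x y)
    (hc_compat : ∀ i j (h : i ≤ j) (x : D i), c j (f i j h x) = c i x)
    (hc'_compat : ∀ i j (h : i ≤ j) (x : D' i), c' j (f' i j h x) = c' i x)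
    (ha : ∀ z : C, ∃ i, ∃ x : D i, c i x = z)
    (ha' : ∀ z : C', ∃ i, ∃ x : D' i, c' i x = z)
    (hb : ∀ i (y y' : D i), edist (c i y) (c i y') =
      ⨅ (j : I) (h : i ≤ j), edist (f i j h y) (f i j h y'))
    (hb' : ∀ i (y y' : D' i), edist (c' i y) (c' i y') =
      ⨅ (j : I) (h : i ≤ j), edist (f' i j h y) (f' i j h y')) :
    (∀ z : C × C', ∃ i, ∃ x : D i × D' i, ((c i x.1, c' i x.2) : C × C') = z) ∧
    (∀ i (y y' : D i × D' i),
      edist ((c i y.1, c' i y.2) : C × C') ((c i y'.1, c' i y'.2) : C × C') =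
        ⨅ (j : I) (h : i ≤ j),
          edist ((f i j h y.1, f' i j h y.2) : D j × D' j)
            ((f i j h y'.1, f' i j h y'.2) : D j × D' j)) := by
  refine ⟨?_, fun i y y' => le_antisymm ?_ ?_⟩
  · rintro ⟨z, z'⟩
    obtain ⟨i, x, rfl⟩ := ha z
    obtain ⟨j, x', rfl⟩ := ha' z'
    obtain ⟨k, hik, hjk⟩ := exists_ge_ge i j
    exact ⟨k, (f i k hik x, f' j k hjk x'),
      Prod.ext (hc_compat i k hik x) (hc'_compat j k hjk x')⟩
  · refine le_iInf₂ fun j h => ?_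
    rw [Prod.edist_eq, Prod.edist_eq]
    refine max_le_max ?_ ?_
    · rw [hb]
      exact iInf₂_le j h
    · rw [hb']
      exact iInf₂_le j h
  · refine le_of_forall_gt fun b hlt => ?_
    rw [Prod.edist_eq, max_lt_iff] at hlt
    obtain ⟨h₁, h₂⟩ := hlt
    dsimp only at h₁ h₂
    simp only [hb, iInf_lt_iff] at h₁
    simp only [hb', iInf_lt_iff] at h₂
    obtain ⟨j, hij, hj⟩ := h₁
    obtain ⟨k, hik, hk⟩ := h₂
    obtain ⟨l, hjl, hkl⟩ := exists_ge_ge j k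
    refine (iInf₂_le l (hij.trans hjl)).trans_lt ?_
    rw [Prod.edist_eq, max_lt_iff]
    dsimp only
    constructor
    · rw [← hf_comp i j l hij hjl, ← hf_comp i j l hij hjl]
      exact (hf_ne j l hjl _ _).trans_lt hj
    · rw [← hf'_comp i k l hik hkl, ← hf'_comp i k l hik hkl]
      exact (hf'_ne k l hkl _ _).trans_lt hk
end

section
/- Directed colimits in the category of complete extended metric spaces and nonexpanding maps commute with binary products: let I be a directed poset, (D_i, f_{ij}) and (D'_i, f'_{ij}) directed diagrams of complete extended metric spaces with nonexpanding connecting maps, and let cocones (c_i : D_i → C) and (c'_i : D'_i → C') of nonexpanding maps into complete extended metric spaces each satisfy the CMet-colimit conditions (a') and (b). Then the cocone (c_i × c'_i : D_i × D'_i → C × C'), where products carry the supremum (max) extended metric, satisfies the CMet-colimit conditions (a') and (b) for the product diagram (D_i × D'_i, f_{ij} × f'_{ij}). -/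
/-!
Everything rests on directedness of `I`. Density: a point of the product of the two unions of
images is `(c i x, c' j x')`, and moving `x` and `x'` to a common upper bound `k` of `i` and `j`
puts it in the image of `c k × c' k`; a product of dense sets is dense. Distance formula: along
`j ≥ i` the distances in `D j` and `D' j` are antitone in `j`, because the connecting maps are
nonexpanding, and for antitone families over a directed poset binary maxima commute with infima:
if `r` bounds both infima strictly from above, witnesses for the two factors can be moved to a
common upper bound, where both distances are below `r`.
-/

/-- **Directed colimits commute with binary products in `CMet`.**
Let `I` be a directed poset, `(D_i, f_{ij})` and `(D'_i, f'_{ij})` directed diagrams of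
complete extended metric spaces with nonexpanding connecting maps, and let `(c_i : D_i → C)` and
`(c'_i : D'_i → C')` be compatible cocones of nonexpanding maps satisfying the two
`CMet`-colimit conditions:
(a') the union of the images of the cocone maps is topologically dense in the colimit, and
(b) `edist (c_i y) (c_i y') = ⨅_{j ≥ i} edist (f_{ij} y) (f_{ij} y')`.
Then the product cocone `(c_i × c'_i : D_i × D'_i → C × C')`, with products carrying the
supremum (max) extended metric, satisfies conditions (a') and (b) for the product diagram
`(D_i × D'_i, f_{ij} × f'_{ij})`. -/
theorem cmet_directed_colimit_commutes_with_binary_product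
    {I : Type*} [PartialOrder I] [IsDirected I (· ≤ ·)] [Nonempty I]
    (D D' : I → Type*) [∀ i, EMetricSpace (D i)] [∀ i, EMetricSpace (D' i)]
    [∀ i, CompleteSpace (D i)] [∀ i, CompleteSpace (D' i)]
    (f : ∀ i j, i ≤ j → D i → D j) (f' : ∀ i j, i ≤ j → D' i → D' j)
    (hf_ne : ∀ i j (h : i ≤ j) (x y : D i), edist (f i j h x) (f i j h y) ≤ edist x y)
    (hf'_ne : ∀ i j (h : i ≤ j) (x y : D' i), edist (f' i j h x) (f' i j h y) ≤ edist x y)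
    (hf_id : ∀ i (x : D i), f i i le_rfl x = x)
    (hf'_id : ∀ i (x : D' i), f' i i le_rfl x = x)
    (hf_comp : ∀ i j k (hij : i ≤ j) (hjk : j ≤ k) (x : D i),
      f j k hjk (f i j hij x) = f i k (hij.trans hjk) x)
    (hf'_comp : ∀ i j k (hij : i ≤ j) (hjk : j ≤ k) (x : D' i),
      f' j k hjk (f' i j hij x) = f' i k (hij.trans hjk) x)
    {C C' : Type*} [EMetricSpace C] [EMetricSpace C'] [CompleteSpace C] [CompleteSpace C']
    (c : ∀ i, D i → C) (c' : ∀ i, D' i → C')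
    (hc_ne : ∀ i (x y : D i), edist (c i x) (c i y) ≤ edist x y)
    (hc'_ne : ∀ i (x y : D' i), edist (c' i x) (c' i y) ≤ edist x y)
    (hc_compat : ∀ i j (h : i ≤ j) (x : D i), c j (f i j h x) = c i x)
    (hc'_compat : ∀ i j (h : i ≤ j) (x : D' i), c' j (f' i j h x) = c' i x)
    (ha : Dense (⋃ i, Set.range (c i)))
    (ha' : Dense (⋃ i, Set.range (c' i)))
    (hb : ∀ i (y y' : D i), edist (c i y) (c i y') =
      ⨅ (j : I) (h : i ≤ j), edist (f i j h y) (f i j h y'))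
    (hb' : ∀ i (y y' : D' i), edist (c' i y) (c' i y') =
      ⨅ (j : I) (h : i ≤ j), edist (f' i j h y) (f' i j h y')) :
    Dense (⋃ i, Set.range (fun x : D i × D' i => ((c i x.1, c' i x.2) : C × C'))) ∧
    (∀ i (y y' : D i × D' i),
      edist ((c i y.1, c' i y.2) : C × C') ((c i y'.1, c' i y'.2) : C × C') =
        ⨅ (j : I) (h : i ≤ j),
          edist ((f i j h y.1, f' i j h y.2) : D j × D' j)
            ((f i j h y'.1, f' i j h y'.2) : D j × D' j)) := by
  constructor
  · refine (ha.prod ha').mono ?_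
    rintro ⟨a, b⟩ ⟨h₁, h₂⟩
    obtain ⟨i, x, rfl⟩ := Set.mem_iUnion.1 h₁
    obtain ⟨j, x', rfl⟩ := Set.mem_iUnion.1 h₂
    obtain ⟨k, hik, hjk⟩ := directed_of (· ≤ ·) i j
    refine Set.mem_iUnion.2 ⟨k, (f i k hik x, f' j k hjk x'), ?_⟩
    simp only [hc_compat, hc'_compat]
  · intro i y y'
    apply le_antisymm
    · refine le_iInf₂ fun j h => ?_
      rw [Prod.edist_eq, Prod.edist_eq]
      refine max_le_max ?_ ?_
      · rw [hb]
        exact iInf₂_le j h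
      · rw [hb']
        exact iInf₂_le j h
    · refine le_of_forall_gt fun r hr => ?_
      rw [Prod.edist_eq, max_lt_iff] at hr
      obtain ⟨h₁, h₂⟩ := hr
      simp only [hb, hb', iInf_lt_iff] at h₁ h₂
      obtain ⟨j, hij, hj⟩ := h₁
      obtain ⟨j', hij', hj'⟩ := h₂
      obtain ⟨k, hjk, hjk'⟩ := directed_of (· ≤ ·) j j'
      refine (iInf₂_le k (hij.trans hjk)).trans_lt ?_
      rw [Prod.edist_eq, max_lt_iff]
      -- Functoriality factors each map to `D k`, `D' k` through the stage of its witness.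
      constructor
      · rw [← hf_comp i j k hij hjk, ← hf_comp i j k hij hjk]
        exact (hf_ne j k hjk _ _).trans_lt hj
      · rw [← hf'_comp i j' k hij' hjk', ← hf'_comp i j' k hij' hjk']
        exact (hf'_ne j' k hjk' _ _).trans_lt hj'
end

section
/- If a subset X of an ω-cpo C is dense, then for every natural number n the set of all n-tuples with components in X is dense in the ω-cpo C^n (i.e., the set {g : Fin n → C | ∀ i, g i ∈ X} is dense in Fin n → C with the pointwise order and pointwise ω-joins). -/
/-!
Fix a sub-ω-cpo `S` of `C^n` containing all tuples over `X`, and replace the coordinates from `X`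
by arbitrary ones, one at a time. Varying a single coordinate of a fixed tuple is an ω-continuous
map `C → C^n`, since constant chains have constant joins. Hence the preimage of `S` under it is a
sub-ω-cpo of `C` (`IsSubωCpo.preimage_update`); once this preimage contains `X`, density of `X`
makes it all of `C`, which frees that coordinate.
-/

open OmegaCompletePartialOrder

/-- A subset `S` of an ω-cpo is a sub-ω-cpo if it is closed under joins of ω-chains all of
whose members lie in `S`. -/
def IsSubωCpo {α : Type*} [OmegaCompletePartialOrder α] (S : Set α) : Prop :=
  ∀ ch : Chain α, (∀ n, ch n ∈ S) → ωSup ch ∈ S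

/-- A subset `X` of an ω-cpo is dense if the only sub-ω-cpo containing `X` is everything. -/
def IsDenseSubset {α : Type*} [OmegaCompletePartialOrder α] (X : Set α) : Prop :=
  ∀ S : Set α, IsSubωCpo S → X ⊆ S → S = Set.univ

lemma IsSubωCpo.preimage_update {ι C : Type*} [DecidableEq ι] [OmegaCompletePartialOrder C]
    {S : Set (ι → C)} (hS : IsSubωCpo S) (g : ι → C) (a : ι) :
    IsSubωCpo (Function.update g a ⁻¹' S) := by
  intro ch hch
  have hsup : Function.update g a (ωSup ch) =
      ωSup (ch.map ⟨Function.update g a, Function.update_mono⟩) := by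
    funext i
    by_cases hia : i = a
    · subst hia
      rw [Function.update_self]
      apply le_antisymm
      · refine ωSup_le _ _ fun k => le_ωSup_of_le k ?_
        simp
      · refine ωSup_le _ _ fun k => ?_
        simpa using le_ωSup ch k
    · rw [Function.update_of_ne hia]
      apply le_antisymm
      · refine le_ωSup_of_le 0 ?_
        simp [hia]
      · refine ωSup_le _ _ fun k => ?_
        simp [hia]
  rw [Set.mem_preimage, hsup]
  exact hS _ hch

/-- If `X` is dense in an ω-cpo `C`, then for every `n` the set of `n`-tuples with components
in `X` is dense in the power `C^n = (Fin n → C)` with the pointwise order and pointwise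
ω-joins. -/
theorem isDenseSubset_pow {C : Type*} [OmegaCompletePartialOrder C] {X : Set C}
    (hX : IsDenseSubset X) (n : ℕ) :
    IsDenseSubset {g : Fin n → C | ∀ i, g i ∈ X} := by
  intro S hS hXS
  -- Tuples whose coordinates outside `s` lie in `X` belong to `S`, by induction on `s`.
  have key : ∀ (s : Finset (Fin n)) (g : Fin n → C), (∀ i, i ∉ s → g i ∈ X) → g ∈ S := by
    intro s
    induction s using Finset.induction_on with
    | empty => exact fun g hg => hXS fun i => hg i (Finset.notMem_empty i)
    | insert a s _ ih =>
      intro g hg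
      have hT := hX _ (hS.preimage_update g a) fun x hx => ih _ fun i hi => by
        by_cases hia : i = a
        · subst hia
          simpa using hx
        · simpa [hia] using hg i (by simp [hia, hi])
      have hga : g a ∈ Function.update g a ⁻¹' S := hT ▸ Set.mem_univ _
      simpa using hga
  exact Set.eq_univ_of_forall fun g => key Finset.univ g fun i hi => absurd (Finset.mem_univ i) hi
end

section
/- Let S be a directed poset and let (a_s : A_s → A) be a colimit cocone of a diagram over S in the category ωCPO of ω-cpos and continuous maps. Then the union ⋃_{s ∈ S} a_s[A_s] of the images of the cocone maps is dense in A, i.e., the only sub-ω-cpo of A containing this union is A itself. -/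
/-!
A sub-ω-cpo `T` of the vertex `A` that contains the images of all cocone maps is itself an ω-cpo
whose inclusion into `A` is continuous, and every cocone map corestricts to `T`. The universal
property gives a map `A ⟶ T` whose composite with the inclusion `T ⟶ A` agrees with the identity
on every cocone map, hence is the identity; so every element of `A` lies in `T`. Directedness of
the index poset plays no role.
-/

open OmegaCompletePartialOrder CategoryTheory

/-- A sub-ω-cpo, as an object of `ωCPO`, with the induced order and joins. -/
def IsSubωCpo.toωCPO {A : ωCPO} {T : Set A} (hT : IsSubωCpo T) : ωCPO :=
  @ωCPO.of T (OmegaCompletePartialOrder.subtype (· ∈ T) fun ch h => hT ch fun n => h _ ⟨n, rfl⟩)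

/-- The continuous inclusion of a sub-ω-cpo. -/
def IsSubωCpo.incl {A : ωCPO} {T : Set A} (hT : IsSubωCpo T) : hT.toωCPO ⟶ A :=
  ContinuousHom.mk (α := hT.toωCPO) (OrderHom.Subtype.val (· ∈ T)) fun _ => rfl

/-- The corestriction of a continuous map to a sub-ω-cpo containing its image. -/
def IsSubωCpo.corestrict {A B : ωCPO} {T : Set A} (hT : IsSubωCpo T) (f : B ⟶ A)
    (hf : ∀ x, ContinuousHom.toOrderHom f x ∈ T) : B ⟶ hT.toωCPO :=
  ContinuousHom.mk (β := hT.toωCPO)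
    ⟨fun x => ⟨ContinuousHom.toOrderHom f x, hf x⟩, fun _ _ h => ContinuousHom.monotone f h⟩
    fun ch => Subtype.ext (ContinuousHom.continuous f ch)

/-- For any colimit cocone `(a_s : A_s → A)` of a diagram over a directed poset `S` in the
category `ωCPO` of ω-cpos and continuous maps, the union `⋃_s a_s[A_s]` of the images of the
cocone maps is dense in `A`: the only sub-ω-cpo of `A` containing it is `A` itself. -/
theorem union_range_isDenseSubset_of_isColimit
    {S : Type} [PartialOrder S] [IsDirected S (· ≤ ·)] [Nonempty S]
    (F : S ⥤ ωCPO) (c : Limits.Cocone F) (hc : Limits.IsColimit c) :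
    IsDenseSubset (α := c.pt) (⋃ s, Set.range ((forget ωCPO).map (c.ι.app s))) := by
  intro T hT hX
  have hmem (s : S) (x : F.obj s) : ContinuousHom.toOrderHom (c.ι.app s) x ∈ T :=
    hX (Set.mem_iUnion.2 ⟨s, x, rfl⟩)
  let d : Limits.Cocone F :=
    { pt := hT.toωCPO
      ι :=
        { app := fun s => hT.corestrict (c.ι.app s) (hmem s)
          naturality := fun s t f => by
            refine ContinuousHom.ext _ _ fun x => Subtype.ext ?_
            exact ContinuousHom.congr_fun (c.ι.naturality f) x } }
  have hid : hc.desc d ≫ hT.incl = 𝟙 c.pt := by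
    refine hc.hom_ext fun s => ?_
    rw [← Category.assoc, hc.fac, Category.comp_id]
    rfl
  refine Set.eq_univ_of_forall fun a => ?_
  have ha : (ContinuousHom.toOrderHom (hc.desc d) a : hT.toωCPO).1 = a :=
    ContinuousHom.congr_fun hid a
  exact ha ▸ (ContinuousHom.toOrderHom (hc.desc d) a : hT.toωCPO).2
end

section
/- Definability of extended terms is preserved by directed colimits of continuous Σ-algebras: let Σ be a signature, S a directed poset, (A_s) a family of continuous Σ-algebras with continuous Σ-homomorphisms as connecting maps, A a continuous Σ-algebra, and (a_s : A_s → A) a compatible cocone of continuous Σ-homomorphisms such that the union ⋃_{s} a_s[A_s] is dense in the ω-cpo A. If an extended term t (over a finite set V₀ of variables) is definable in every A_s, then t is definable in A. -/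
/-!
Fix the target algebra `B`. Evaluation of extended terms is monotone in the interpretation
(`Evals.le`), and it commutes with joins of ω-chains of interpretations: if `t` is defined at each
member of a pointwise ω-chain, it is defined at the join, because for `t = ⋁_k t_k` the values
`a_{n,k}` increase in both indices, so that `⨆_n a_{n,k}` increases in `k` and the two joins may be
interchanged (`Evals.chain`). Hence the interpretations at which `t` is defined are closed under
joins of ω-chains.

An interpretation with values in `⋃ s, a_s[A_s]` factors through a single `A_s`, since `V₀` is
finite and `S` is directed, so `t` is defined there because homomorphisms preserve defined values
(`Evals.map`). Density extends this to all interpretations, one variable at a time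
(`forall_of_dense`).
-/


open OmegaCompletePartialOrder

universe u v w

/-- A function between ω-cpos is (ω-)continuous if it is monotone and preserves
joins of ω-chains. -/
def OmegaContinuous {α : Type u} {β : Type v} [OmegaCompletePartialOrder α]
    [OmegaCompletePartialOrder β] (f : α → β) : Prop :=
  ∃ hm : Monotone f, ∀ ch : Chain α, f (ωSup ch) = ωSup (ch.map ⟨f, hm⟩)

/-- A continuous `Σ`-algebra for a signature `Sg : ℕ → Type` (the family of sets of `n`-ary
operation symbols): an ω-cpo `A` with, for each `σ ∈ Sg n`, a continuous operation
`A^n → A` (the power `Fin n → A` carrying the coordinatewise order). -/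
structure ContSigmaAlg (Sg : ℕ → Type u) (A : Type v) [OmegaCompletePartialOrder A] where
  op : ∀ {n : ℕ}, Sg n → (Fin n → A) → A
  op_cont : ∀ {n : ℕ} (σ : Sg n), OmegaContinuous (op σ)

/-- A continuous `Σ`-homomorphism: a continuous map preserving all the operations. -/
structure IsContHom {Sg : ℕ → Type u} {A : Type v} {B : Type w}
    [OmegaCompletePartialOrder A] [OmegaCompletePartialOrder B]
    (algA : ContSigmaAlg Sg A) (algB : ContSigmaAlg Sg B) (h : A → B) : Prop where
  cont : OmegaContinuous h
  map_op : ∀ {n : ℕ} (σ : Sg n) (a : Fin n → A), h (algA.op σ a) = algB.op σ (h ∘ a)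

/-- Extended terms over a signature `Sg` and a set `V` of variables: ordinary terms together
with formal countable joins `⋁_{k ∈ ℕ} t_k`. -/
inductive ExtTerm (Sg : ℕ → Type u) (V : Type v) : Type (max u v)
  | var : V → ExtTerm Sg V
  | app : ∀ {n : ℕ}, Sg n → (Fin n → ExtTerm Sg V) → ExtTerm Sg V
  | join : (ℕ → ExtTerm Sg V) → ExtTerm Sg V

/-- The (partial) interpretation of extended terms: `Evals alg f t a` says that under the
interpretation `f : V → A` of the variables, the extended term `t` is defined and has value
`a`.  A formal join `⋁_k t_k` is defined iff each `t_k` is defined and the values form an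
ascending chain, in which case its value is the join of the chain. -/
inductive Evals {Sg : ℕ → Type u} {V : Type v} {A : Type w} [OmegaCompletePartialOrder A]
    (alg : ContSigmaAlg Sg A) (f : V → A) : ExtTerm Sg V → A → Prop
  | var (v : V) : Evals alg f (.var v) (f v)
  | app {n : ℕ} (σ : Sg n) (t : Fin n → ExtTerm Sg V) (a : Fin n → A) :
      (∀ i, Evals alg f (t i) (a i)) → Evals alg f (.app σ t) (alg.op σ a)
  | join (t : ℕ → ExtTerm Sg V) (a : ℕ → A) (ha : ∀ k, a k ≤ a (k + 1)) :
      (∀ k, Evals alg f (t k) (a k)) →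
      Evals alg f (.join t) (ωSup ⟨a, monotone_nat_of_le_succ ha⟩)

/-- An extended term is definable in an algebra if its interpretation is defined for every
interpretation of the variables. -/
def Definable {Sg : ℕ → Type u} {V : Type v} {A : Type w} [OmegaCompletePartialOrder A]
    (alg : ContSigmaAlg Sg A) (t : ExtTerm Sg V) : Prop :=
  ∀ f : V → A, ∃ a : A, Evals alg f t a

/-- Evaluation is monotone in the interpretation; with `f = g` this gives uniqueness of values. -/
theorem Evals.le {Sg : ℕ → Type u} {V : Type v} {A : Type w} [OmegaCompletePartialOrder A]
    {alg : ContSigmaAlg Sg A} {f g : V → A} (hfg : ∀ v, f v ≤ g v) {t : ExtTerm Sg V} {x y : A}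
    (hx : Evals alg f t x) (hy : Evals alg g t y) : x ≤ y := by
  induction hx generalizing y with
  | var v => cases hy; exact hfg v
  | app σ t a _ ih =>
    cases hy with
    | app _ _ b hb =>
      obtain ⟨hm, -⟩ := alg.op_cont σ
      exact hm fun i => ih i (hb i)
  | join t a ha _ ih =>
    cases hy with
    | join _ b hb' hb =>
      exact ωSup_le_ωSup_of_le fun k => ⟨k, ih k (hb k)⟩

theorem Evals.map {Sg : ℕ → Type u} {V : Type v} {A B : Type w} [OmegaCompletePartialOrder A]
    [OmegaCompletePartialOrder B] {algA : ContSigmaAlg Sg A} {algB : ContSigmaAlg Sg B}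
    {h : A → B} (hh : IsContHom algA algB h) {f : V → A} {t : ExtTerm Sg V} {x : A}
    (hx : Evals algA f t x) : Evals algB (fun v => h (f v)) t (h x) := by
  induction hx with
  | var v => exact .var (f := fun v => h (f v)) v
  | app σ t a _ ih =>
    rw [hh.map_op]
    exact .app σ t _ ih
  | join t a ha _ ih =>
    obtain ⟨hm, hc⟩ := hh.cont
    rw [hc]
    exact .join t (fun k => h (a k)) (fun k => hm (ha k)) ih

/-- Evaluation commutes with the join of an ω-chain `n ↦ (v ↦ c v n)` of interpretations at which
the term is defined. -/
theorem Evals.chain {Sg : ℕ → Type u} {V : Type v} {A : Type w} [OmegaCompletePartialOrder A]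
    {alg : ContSigmaAlg Sg A} (c : V → Chain A) (t : ExtTerm Sg V) (x : Chain A)
    (hx : ∀ n, Evals alg (fun v => c v n) t (x n)) :
    Evals alg (fun v => ωSup (c v)) t (ωSup x) := by
  have hc : ∀ {m n : ℕ}, m ≤ n → ∀ v, c v m ≤ c v n := fun h v => (c v).monotone h
  induction t generalizing x with
  | var v =>
    have hxv : x = c v := by
      ext n
      have h := hx n
      generalize x n = y at h
      cases h
      rfl
    rw [hxv]
    exact .var (f := fun v => ωSup (c v)) v
  | app σ t ih =>
    have h : ∀ n, ∃ b, (∀ i, Evals alg (fun v => c v n) (t i) (b i)) ∧ x n = alg.op σ b := by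
      intro n
      have h := hx n
      generalize x n = y at h
      cases h with
      | app _ _ b hb => exact ⟨b, hb, rfl⟩
    choose b hb hxb using h
    have hbm : Monotone b := fun m n hmn i => (hb m i).le (hc hmn) (hb n i)
    obtain ⟨hm, hs⟩ := alg.op_cont σ
    have hx' : x = Chain.map ⟨b, hbm⟩ ⟨alg.op σ, hm⟩ := by
      ext n
      exact hxb n
    rw [hx', ← hs]
    exact .app σ t _ fun i => ih i ⟨fun n => b n i, fun m n hmn => hbm hmn i⟩ fun n => hb n i
  | join t ih =>
    have h : ∀ n, ∃ (b : ℕ → A) (hb : ∀ k, b k ≤ b (k + 1)),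
        (∀ k, Evals alg (fun v => c v n) (t k) (b k)) ∧
          x n = ωSup ⟨b, monotone_nat_of_le_succ hb⟩ := by
      intro n
      have h := hx n
      generalize x n = y at h
      cases h with
      | join _ b hb' hb => exact ⟨b, hb', hb, rfl⟩
    choose b hbk hb hxb using h
    let d : ℕ → Chain A := fun k =>
      ⟨fun n => b n k, fun m n hmn => (hb m k).le (hc hmn) (hb n k)⟩
    have hd : ∀ k, ωSup (d k) ≤ ωSup (d (k + 1)) := fun k =>
      ωSup_le_ωSup_of_le fun n => ⟨n, hbk n k⟩
    have hx' : ωSup x = ωSup ⟨fun k => ωSup (d k), monotone_nat_of_le_succ hd⟩ := by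
      apply le_antisymm
      · refine ωSup_le _ _ fun n => ?_
        rw [hxb n]
        exact ωSup_le_ωSup_of_le fun k => ⟨k, le_ωSup (d k) n⟩
      · refine ωSup_le _ _ fun k => ωSup_le_ωSup_of_le fun n => ⟨n, ?_⟩
        rw [hxb n]
        exact le_ωSup (⟨b n, monotone_nat_of_le_succ (hbk n)⟩ : Chain A) k
    rw [hx']
    exact .join t _ hd fun k => ih k (d k) fun n => hb n k

/-- For finite `V`, the power `X ^ V` of a dense subset `X` is dense in `A ^ V`: a property of
functions `V → A` that is closed under pointwise joins of ω-chains and holds for functions with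
values in `X` holds for all functions. -/
theorem forall_of_dense {V : Type v} [Finite V] {A : Type w} [OmegaCompletePartialOrder A]
    {X : Set A} (hX : IsDenseSubset X) (P : (V → A) → Prop)
    (hP : ∀ c : V → Chain A, (∀ n, P fun v => c v n) → P fun v => ωSup (c v))
    (h₀ : ∀ f : V → A, (∀ v, f v ∈ X) → P f) (f : V → A) : P f := by
  classical
  have : Fintype V := Fintype.ofFinite V
  -- `W` is the set of variables on which the values are no longer required to lie in `X`.
  suffices H : ∀ (W : Finset V) (f : V → A), (∀ v, v ∉ W → f v ∈ X) → P f from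
    H Finset.univ f fun v hv => absurd (Finset.mem_univ v) hv
  intro W
  induction W using Finset.induction_on with
  | empty => exact fun f hf => h₀ f fun v => hf v (Finset.notMem_empty v)
  | insert w W _ ih =>
    intro f hf
    have hS : {b | P (Function.update f w b)} = Set.univ := by
      apply hX
      · intro ch hch
        -- The chain `update f w (ch n)` is constant off `w`.
        have h := hP (Function.update
          (fun v => (⟨fun _ => f v, monotone_const⟩ : Chain A)) w ch) fun n => by
            have hn : P (Function.update f w (ch n)) := hch n
            convert hn using 1
            funext v
            by_cases hv : v = w
            · subst hv; simp
            · simp only [Function.update_of_ne hv]; rfl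
        show P _
        convert h using 1
        funext v
        by_cases hv : v = w
        · subst hv; simp
        · simp only [Function.update_of_ne hv]
          exact le_antisymm (le_ωSup (⟨fun _ => f v, monotone_const⟩ : Chain A) 0)
            (ωSup_le _ _ fun _ => le_rfl)
      · intro b hb
        refine ih _ fun v hv => ?_
        by_cases hvw : v = w
        · subst hvw; simpa using hb
        · rw [Function.update_of_ne hvw]
          exact hf v (by simp [hvw, hv])
    have h : f w ∈ {b | P (Function.update f w b)} := hS ▸ Set.mem_univ _
    simpa using h

/-- **Definability of extended terms is preserved by directed colimits of continuous
`Σ`-algebras:** given a directed poset `S`, a directed diagram `(A_s)` of continuous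
`Σ`-algebras with continuous homomorphisms `g` as connecting maps, and a compatible cocone
of continuous homomorphisms `(a_s : A_s → A)` whose images have dense union, any extended
term `t` over a finite set `V₀` of variables that is definable in every `A_s` is definable
in `A`. -/
theorem definable_of_directed_colimit
    {Sg : ℕ → Type} {V₀ : Type} [Finite V₀]
    {S : Type} [PartialOrder S] [IsDirected S (· ≤ ·)] [Nonempty S]
    (A : S → Type) [∀ s, OmegaCompletePartialOrder (A s)]
    (alg : ∀ s, ContSigmaAlg Sg (A s))
    (g : ∀ s s', s ≤ s' → A s → A s')
    (hg_hom : ∀ s s' (h : s ≤ s'), IsContHom (alg s) (alg s') (g s s' h))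
    (hg_id : ∀ s (x : A s), g s s le_rfl x = x)
    (hg_comp : ∀ s s' s'' (h : s ≤ s') (h' : s' ≤ s'') (x : A s),
      g s' s'' h' (g s s' h x) = g s s'' (h.trans h') x)
    (B : Type) [OmegaCompletePartialOrder B] (algB : ContSigmaAlg Sg B)
    (a : ∀ s, A s → B)
    (ha_hom : ∀ s, IsContHom (alg s) algB (a s))
    (ha_compat : ∀ s s' (h : s ≤ s') (x : A s), a s' (g s s' h x) = a s x)
    (ha_dense : IsDenseSubset (⋃ s, Set.range (a s)))
    (t : ExtTerm Sg V₀)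
    (ht : ∀ s, Definable (alg s) t) :
    Definable algB t := by
  refine forall_of_dense ha_dense (fun f => ∃ b, Evals algB f t b) ?_ ?_
  · intro c hc
    choose x hx using hc
    have hm : Monotone x := fun m n hmn => (hx m).le (fun v => (c v).monotone hmn) (hx n)
    exact ⟨_, Evals.chain c t ⟨x, hm⟩ hx⟩
  · intro f hf
    have h : ∀ v, ∃ s y, a s y = f v := fun v => by simpa using hf v
    choose s y hy using h
    obtain ⟨s', hs'⟩ := Finite.exists_le s
    obtain ⟨b, hb⟩ := ht s' fun v => g _ _ (hs' v) (y v)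
    have hb' := hb.map (ha_hom s')
    simp only [ha_compat, hy] at hb'
    exact ⟨_, hb'⟩
end

section
/- Every variety of continuous algebras is closed under directed colimits: let Σ be a signature, S a directed poset, (A_s) a family of continuous Σ-algebras with continuous Σ-homomorphisms as connecting maps, A a continuous Σ-algebra, and (a_s : A_s → A) a compatible cocone of continuous Σ-homomorphisms such that the union ⋃_{s} a_s[A_s] is dense in the ω-cpo A. If every A_s satisfies the equation t = t' between extended terms (over a finite set V₀ of variables), then A satisfies t = t'. -/
/-!
The set of interpretations `f : V₀ → B` under which `t` and `t'` are both defined with the same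
value is a sub-ω-cpo of the power `V₀ → B`: the evaluation relation is monotone in `f`
(`Evals.le_of_le`) and compatible with joins of chains of interpretations (`Evals.ωSup_chain`,
where formal joins are handled by interchanging two countable joins). It contains every
interpretation with values in `⋃ s, Set.range (a s)`: since `V₀` is finite and `S` is directed,
such an interpretation factors through a single `a s`, and homomorphisms preserve evaluation
(`Evals.map_hom`). Finally, as `V₀` is finite, a sub-ω-cpo of the power which contains all
functions with values in a dense set is everything (`mem_of_isDenseSubset_pi`); one frees the
coordinates one at a time.
-/

open OmegaCompletePartialOrder

universe u v w

/-- An algebra satisfies the equation `t = t'` if for every interpretation of the variables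
both sides are defined and equal. -/
def SatisfiesEq {Sg : ℕ → Type u} {V : Type v} {A : Type w} [OmegaCompletePartialOrder A]
    (alg : ContSigmaAlg Sg A) (t t' : ExtTerm Sg V) : Prop :=
  ∀ f : V → A, ∃ a : A, Evals alg f t a ∧ Evals alg f t' a

theorem Evals.le_of_le {Sg : ℕ → Type u} {V : Type v} {A : Type w}
    [OmegaCompletePartialOrder A] {alg : ContSigmaAlg Sg A} {f f' : V → A} (hf : f ≤ f')
    {t : ExtTerm Sg V} {x x' : A} (h : Evals alg f t x) (h' : Evals alg f' t x') : x ≤ x' := by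
  induction t generalizing x x' with
  | var v =>
    cases h
    cases h'
    exact hf v
  | app σ t ih =>
    cases h with | app _ _ b hb =>
    cases h' with | app _ _ b' hb' =>
    obtain ⟨hm, -⟩ := alg.op_cont σ
    exact hm fun i => ih i (hb i) (hb' i)
  | join t ih =>
    cases h with | join _ b hmono hb =>
    cases h' with | join _ b' hmono' hb' =>
    exact ωSup_le_ωSup_of_le fun k => ⟨k, ih k (hb k) (hb' k)⟩

theorem Evals.ωSup_chain {Sg : ℕ → Type u} {V : Type v} {A : Type w}
    [OmegaCompletePartialOrder A] {alg : ContSigmaAlg Sg A} (c : Chain (V → A))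
    (t : ExtTerm Sg V) (x : Chain A) (h : ∀ n, Evals alg (c n) t (x n)) :
    Evals alg (ωSup c) t (ωSup x) := by
  induction t generalizing x with
  | var v =>
    have hx : x = c.map (Pi.evalOrderHom v) := by
      ext n
      have hn := h n
      generalize x n = y at hn
      cases hn
      rfl
    rw [hx]
    exact Evals.var v
  | app σ t ih =>
    have h' : ∀ n, ∃ b, x n = alg.op σ b ∧ ∀ i, Evals alg (c n) (t i) (b i) := by
      intro n
      have hn := h n
      generalize x n = y at hn
      cases hn with | app _ _ b hb => exact ⟨b, rfl, hb⟩
    choose b hxb hb using h'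
    let bc : Chain (Fin _ → A) :=
      ⟨b, fun n m hnm i => (hb n i).le_of_le (c.monotone hnm) (hb m i)⟩
    obtain ⟨hm, hsup⟩ := alg.op_cont σ
    have hx : x = bc.map ⟨alg.op σ, hm⟩ := by
      ext n
      exact hxb n
    rw [hx, ← hsup]
    exact Evals.app σ t _ fun i => ih i (bc.map (Pi.evalOrderHom i)) fun n => hb n i
  | join t ih =>
    have h' : ∀ n, ∃ (b : ℕ → A) (hmono : ∀ k, b k ≤ b (k + 1)),
        x n = ωSup ⟨b, monotone_nat_of_le_succ hmono⟩ ∧ ∀ k, Evals alg (c n) (t k) (b k) := by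
      intro n
      have hn := h n
      generalize x n = y at hn
      cases hn with | join _ b hmono hb => exact ⟨b, hmono, rfl, hb⟩
    choose b hmono hxb hb using h'
    let bc : ℕ → Chain A := fun k =>
      ⟨fun n => b n k, fun n m hnm => (hb n k).le_of_le (c.monotone hnm) (hb m k)⟩
    have hd : ∀ k, ωSup (bc k) ≤ ωSup (bc (k + 1)) := fun k =>
      ωSup_le_ωSup_of_le fun n => ⟨n, hmono n k⟩
    -- Interchange of the two joins: `⨆ n, ⨆ k, b n k = ⨆ k, ⨆ n, b n k`.
    have hx : ωSup x = ωSup ⟨fun k => ωSup (bc k), monotone_nat_of_le_succ hd⟩ := by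
      apply le_antisymm
      · refine ωSup_le _ _ fun n => ?_
        rw [hxb]
        exact ωSup_le_ωSup_of_le fun k => ⟨k, le_ωSup (bc k) n⟩
      · refine ωSup_le _ _ fun k => ωSup_le _ _ fun n => ?_
        refine le_trans ?_ (le_ωSup x n)
        rw [hxb]
        exact le_ωSup (⟨b n, monotone_nat_of_le_succ (hmono n)⟩ : Chain A) k
    rw [hx]
    exact Evals.join t _ hd fun k => ih k (bc k) fun n => hb n k

theorem Evals.map_hom {Sg : ℕ → Type u} {V : Type v} {A : Type w} {B : Type*}
    [OmegaCompletePartialOrder A] [OmegaCompletePartialOrder B] {algA : ContSigmaAlg Sg A}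
    {algB : ContSigmaAlg Sg B} {h : A → B} (hh : IsContHom algA algB h) {f : V → A}
    {t : ExtTerm Sg V} {x : A} (ht : Evals algA f t x) : Evals algB (h ∘ f) t (h x) := by
  induction ht with
  | var v => exact Evals.var (f := h ∘ f) v
  | app σ t b _ ih =>
    rw [hh.map_op]
    exact Evals.app σ t _ ih
  | join t b hb _ ih =>
    obtain ⟨hm, hsup⟩ := hh.cont
    rw [hsup]
    exact Evals.join t (h ∘ b) (fun k => hm (hb k)) ih

/-- The set of interpretations satisfying a given equation is a sub-ω-cpo of the power. -/
theorem isSubωCpo_setOf_evals_eq {Sg : ℕ → Type u} {V : Type v} {A : Type w}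
    [OmegaCompletePartialOrder A] (alg : ContSigmaAlg Sg A) (t t' : ExtTerm Sg V) :
    IsSubωCpo {f : V → A | ∃ x, Evals alg f t x ∧ Evals alg f t' x} := by
  intro c hc
  choose x hx hx' using hc
  let xc : Chain A := ⟨x, fun n m hnm => (hx n).le_of_le (c.monotone hnm) (hx m)⟩
  exact ⟨ωSup xc, Evals.ωSup_chain c t xc hx, Evals.ωSup_chain c t' xc hx'⟩

theorem mem_of_isDenseSubset_pi {V : Type v} [Finite V] {B : Type w}
    [OmegaCompletePartialOrder B] {X : Set B} (hX : IsDenseSubset X) {P : Set (V → B)}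
    (hP : IsSubωCpo P) (hXP : ∀ f : V → B, (∀ v, f v ∈ X) → f ∈ P) (f : V → B) : f ∈ P := by
  classical
  cases nonempty_fintype V
  -- The coordinates in `T` are arbitrary, the others still lie in `X`.
  have key : ∀ (T : Finset V) (f : V → B), (∀ v ∉ T, f v ∈ X) → f ∈ P := by
    intro T
    induction T using Finset.induction_on with
    | empty => exact fun f hf => hXP f fun v => hf v (Finset.notMem_empty v)
    | insert v T _ ih =>
      intro f hf
      have hsub : IsSubωCpo {b | Function.update f v b ∈ P} := by
        intro c hc
        have hm : Monotone (Function.update f v) := Function.update_mono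
        have heq : Function.update f v (ωSup c) = ωSup (c.map ⟨Function.update f v, hm⟩) := by
          funext w
          change _ = ωSup ((c.map ⟨Function.update f v, hm⟩).map (Pi.evalOrderHom w))
          by_cases hw : w = v
          · subst hw
            rw [Function.update_self]
            congr 1
            ext n
            exact (Function.update_self w (c n) f).symm
          · rw [Function.update_of_ne hw]
            -- Away from `v` the chain is constant.
            have hcst (n : ℕ) : ((c.map ⟨Function.update f v, hm⟩).map (Pi.evalOrderHom w)) n
                = f w := by
              change Function.update f v (c n) w = f w
              exact Function.update_of_ne hw _ _
            exact le_antisymm ((hcst 0).ge.trans (le_ωSup _ 0))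
              (ωSup_le _ _ fun n => (hcst n).le)
        change Function.update f v (ωSup c) ∈ P
        rw [heq]
        exact hP _ hc
      have huniv := hX _ hsub fun b hb => ih _ fun w hw => by
        by_cases hwv : w = v
        · subst hwv
          rwa [Function.update_self]
        · rw [Function.update_of_ne hwv]
          exact hf w (by simp [hwv, hw])
      have hfv : f v ∈ {b | Function.update f v b ∈ P} := huniv ▸ Set.mem_univ _
      simpa using hfv
  exact key Finset.univ f fun v hv => absurd (Finset.mem_univ v) hv

/-- **Every variety of continuous algebras is closed under directed colimits:** given a
directed poset `S`, a directed diagram `(A_s)` of continuous `Σ`-algebras with continuous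
homomorphisms `g` as connecting maps, and a compatible cocone of continuous homomorphisms
`(a_s : A_s → A)` whose images have dense union, if every `A_s` satisfies an equation
`t = t'` between extended terms over a finite set `V₀` of variables, then so does `A`. -/
theorem satisfiesEq_of_directed_colimit
    {Sg : ℕ → Type} {V₀ : Type} [Finite V₀]
    {S : Type} [PartialOrder S] [IsDirected S (· ≤ ·)] [Nonempty S]
    (A : S → Type) [∀ s, OmegaCompletePartialOrder (A s)]
    (alg : ∀ s, ContSigmaAlg Sg (A s))
    (g : ∀ s s', s ≤ s' → A s → A s')
    (hg_hom : ∀ s s' (h : s ≤ s'), IsContHom (alg s) (alg s') (g s s' h))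
    (hg_id : ∀ s (x : A s), g s s le_rfl x = x)
    (hg_comp : ∀ s s' s'' (h : s ≤ s') (h' : s' ≤ s'') (x : A s),
      g s' s'' h' (g s s' h x) = g s s'' (h.trans h') x)
    (B : Type) [OmegaCompletePartialOrder B] (algB : ContSigmaAlg Sg B)
    (a : ∀ s, A s → B)
    (ha_hom : ∀ s, IsContHom (alg s) algB (a s))
    (ha_compat : ∀ s s' (h : s ≤ s') (x : A s), a s' (g s s' h x) = a s x)
    (ha_dense : IsDenseSubset (⋃ s, Set.range (a s)))
    (t t' : ExtTerm Sg V₀)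
    (ht : ∀ s, SatisfiesEq (alg s) t t') :
    SatisfiesEq algB t t' := by
  refine mem_of_isDenseSubset_pi ha_dense (isSubωCpo_setOf_evals_eq algB t t') fun f hf => ?_
  simp only [Set.mem_iUnion, Set.mem_range] at hf
  choose i y hy using hf
  -- Finitely many indices have an upper bound, so `f` factors through a single `a s`.
  obtain ⟨s, hs⟩ := Finite.exists_le i
  obtain ⟨x, hx, hx'⟩ := ht s fun v => g (i v) s (hs v) (y v)
  have hfac : f = a s ∘ fun v => g (i v) s (hs v) (y v) := by
    funext v
    exact ((ha_compat _ _ _ _).trans (hy v)).symm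
  rw [hfac]
  exact ⟨a s x, hx.map_hom (ha_hom s), hx'.map_hom (ha_hom s)⟩
end

section
/- The forgetful functor from continuous Σ-algebras to ω-cpos creates directed colimits at the level of algebra structure: let Σ be a signature, I a directed poset, (D_i) a family of continuous Σ-algebras with continuous Σ-homomorphisms as connecting maps, and let (c_i : D_i → C) be a colimit cocone in the category ωCPO of the underlying diagram of ω-cpos. Then there exists a unique family of operations σ_C : C^n → C (σ ∈ Σ_n, n ∈ ℕ), each continuous with respect to the coordinatewise order, such that every c_i is a Σ-homomorphism, i.e., σ_C ∘ c_i^n = c_i ∘ σ_{D_i} for all i and all σ. -/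
/-!
The category `ωCPO` is cartesian closed, so colimits of ω-cpos are preserved by products in each
variable separately; since a directed poset is sifted, the diagonal of a two-variable directed
colimit computes it, and hence the product of two colimit cocones over the same directed poset is a
colimit cocone (`IsColim.prod`). By induction on `n`, the powers `c_i^n : D_i^n → C^n` form a
colimit cocone (`IsColim.pow`). For a symbol `σ` of arity `n`, the maps `c_i ∘ σ_{D_i}` form a cocone
on the diagram `D_i^n` because the connecting maps are homomorphisms; the continuous map
`C^n → C` which it induces is the required operation, and uniqueness of the operation is
uniqueness of the induced map.
-/

open OmegaCompletePartialOrder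

universe u v w

theorem omegaContinuous_iff {α : Type u} {β : Type v} [OmegaCompletePartialOrder α]
    [OmegaCompletePartialOrder β] {f : α → β} : OmegaContinuous f ↔ ωScottContinuous f :=
  ωScottContinuous_iff_monotone_map_ωSup.symm

/-- A map into the function space `β →𝒄 γ` is continuous if it is so pointwise, because joins of
chains in `β →𝒄 γ` are pointwise. With `ContinuousHom.ωScottContinuous_apply`, this is the cartesian
closedness of `ωCPO`. -/
theorem ωScottContinuous_curry {α β γ : Type} [OmegaCompletePartialOrder α]
    [OmegaCompletePartialOrder β] [OmegaCompletePartialOrder γ] {F : α → β →𝒄 γ}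
    (hF : ∀ b, ωScottContinuous fun a => F a b) : ωScottContinuous F := by
  refine .of_monotone_map_ωSup ⟨fun a a' h b => (hF b).monotone h, fun ch => ?_⟩
  refine ContinuousHom.ext _ _ fun b => ?_
  exact (hF b).map_ωSup ch

/-- `c` is a colimit cocone in `ωCPO`, with vertex `C`, over the `I`-indexed diagram of ω-cpos
`D i` with connecting maps `g i j`. Neither functoriality nor continuity of `g` is part of the
definition. -/
structure IsColim {I : Type} [PartialOrder I] (D : I → Type)
    [∀ i, OmegaCompletePartialOrder (D i)] (g : ∀ i j, i ≤ j → D i → D j)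
    (C : Type) [OmegaCompletePartialOrder C] (c : ∀ i, D i → C) : Prop where
  cont : ∀ i, ωScottContinuous (c i)
  compat : ∀ i j (h : i ≤ j) (x : D i), c j (g i j h x) = c i x
  univ : ∀ (X : Type) [OmegaCompletePartialOrder X] (h : ∀ i, D i → X),
    (∀ i, ωScottContinuous (h i)) →
    (∀ i j (hij : i ≤ j) (x : D i), h j (g i j hij x) = h i x) →
    ∃! k : C → X, ωScottContinuous k ∧ ∀ i x, k (c i x) = h i x

namespace IsColim

variable {I : Type} [PartialOrder I]
  {D : I → Type} [∀ i, OmegaCompletePartialOrder (D i)] {g : ∀ i j, i ≤ j → D i → D j}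
  {C : Type} [OmegaCompletePartialOrder C] {c : ∀ i, D i → C}

theorem hom_ext (hc : IsColim D g C c) {X : Type} [OmegaCompletePartialOrder X] {u v : C → X}
    (hu : ωScottContinuous u) (hv : ωScottContinuous v) (h : ∀ i x, u (c i x) = v (c i x)) :
    u = v :=
  (hc.univ X (fun i x => v (c i x)) (fun i => hv.comp (hc.cont i))
    (fun i j hij x => by rw [hc.compat])).unique ⟨hu, h⟩ ⟨hv, fun _ _ => rfl⟩

/-- Over a directed poset, the product of two colimit cocones is a colimit cocone. A cocone
`h_i : D_i × E_i → X` extends to maps `D_i × E_j → X` through any upper bound of `i` and `j`;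
these are curried to induce first `B → (D_i →𝒄 X)` and then `C → (B →𝒄 X)`. -/
theorem prod [IsDirected I (· ≤ ·)] (hc : IsColim D g C c)
    (hg : ∀ i j h, ωScottContinuous (g i j h))
    (hg_comp : ∀ i j k (h : i ≤ j) (h' : j ≤ k) (x : D i),
      g j k h' (g i j h x) = g i k (h.trans h') x)
    {E : I → Type} [∀ i, OmegaCompletePartialOrder (E i)] {e : ∀ i j, i ≤ j → E i → E j}
    {B : Type} [OmegaCompletePartialOrder B] {d : ∀ i, E i → B} (hd : IsColim E e B d)
    (he : ∀ i j h, ωScottContinuous (e i j h))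
    (he_comp : ∀ i j k (h : i ≤ j) (h' : j ≤ k) (x : E i),
      e j k h' (e i j h x) = e i k (h.trans h') x) :
    IsColim (fun i => D i × E i) (fun i j h p => (g i j h p.1, e i j h p.2)) (C × B)
      (fun i p => (c i p.1, d i p.2)) where
  cont i := Prod.ωScottContinuous.prodMk ((hc.cont i).comp Prod.ωScottContinuous_fst)
    ((hd.cont i).comp Prod.ωScottContinuous_snd)
  compat i j h p := by simp [hc.compat, hd.compat]
  univ X _ h hh hcomp := by
    choose ub hl hr using fun i j : I => exists_ge_ge i j
    let A : ∀ i j, D i × E j → X := fun i j p =>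
      h (ub i j) (g i _ (hl i j) p.1, e j _ (hr i j) p.2)
    have A_eq : ∀ i j k (hi : i ≤ k) (hj : j ≤ k) (p : D i × E j),
        A i j p = h k (g i k hi p.1, e j k hj p.2) := by
      intro i j k hi hj p
      obtain ⟨l, h1, h2⟩ := exists_ge_ge (ub i j) k
      change h _ _ = _
      rw [← hcomp _ l h1, ← hcomp _ l h2]
      simp only [hg_comp, he_comp]
    have A_cont : ∀ i j, ωScottContinuous (A i j) := fun i j =>
      (hh (ub i j)).comp (Prod.ωScottContinuous.prodMk ((hg _ _ _).comp Prod.ωScottContinuous_fst)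
        ((he _ _ _).comp Prod.ωScottContinuous_snd))
    have A_left : ∀ i i' j (hi : i ≤ i') x y, A i' j (g i i' hi x, y) = A i j (x, y) := by
      intro i i' j hi x y
      rw [A_eq i j (ub i' j) (hi.trans (hl _ _)) (hr _ _), A_eq i' j (ub i' j) (hl _ _) (hr _ _)]
      simp only [hg_comp]
    have A_right : ∀ i j j' (hj : j ≤ j') x y, A i j' (x, e j j' hj y) = A i j (x, y) := by
      intro i j j' hj x y
      rw [A_eq i j (ub i j') (hl _ _) (hj.trans (hr _ _)), A_eq i j' (ub i j') (hl _ _) (hr _ _)]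
      simp only [he_comp]
    have A_x : ∀ i j y, ωScottContinuous fun x => A i j (x, y) := fun i j y =>
      (A_cont i j).comp (Prod.ωScottContinuous.prodMk ωScottContinuous.id ωScottContinuous.const)
    have A_y : ∀ i j x, ωScottContinuous fun y => A i j (x, y) := fun i j x =>
      (A_cont i j).comp (Prod.ωScottContinuous.prodMk ωScottContinuous.const ωScottContinuous.id)
    have hM : ∀ i, ∃ M : B → D i →𝒄 X, ωScottContinuous M ∧
        ∀ j y x, M (d j y) x = A i j (x, y) := by
      intro i
      obtain ⟨M, ⟨hM, hM'⟩, -⟩ := hd.univ (D i →𝒄 X)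
        (fun j y => ContinuousHom.ofFun (fun x => A i j (x, y)) (A_x i j y))
        (fun j => ωScottContinuous_curry fun x => A_y i j x)
        (fun j j' hj y => ContinuousHom.ext _ _ fun x => A_right i j j' hj x y)
      exact ⟨M, hM, fun j y x => by rw [hM']; rfl⟩
    choose M M_cont M_eq using hM
    have M_cont' : ∀ i x, ωScottContinuous fun b => M i b x := fun i x =>
      ContinuousHom.ωScottContinuous_apply (M_cont i) ωScottContinuous.const
    obtain ⟨k, ⟨hk, hk'⟩, -⟩ := hc.univ (B →𝒄 X)
      (fun i x => ContinuousHom.ofFun (fun b => M i b x) (M_cont' i x))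
      (fun i => ωScottContinuous_curry fun b => (M i b).ωScottContinuous)
      (fun i j hij x => ContinuousHom.ext _ _ fun b => by
        refine congrFun (hd.hom_ext (M_cont' j (g i j hij x)) (M_cont' i x) fun l y => ?_) b
        rw [M_eq, M_eq, A_left])
    refine ⟨fun p => k p.1 p.2, ⟨?_, ?_⟩, ?_⟩
    · exact ContinuousHom.ωScottContinuous_apply (hk.comp Prod.ωScottContinuous_fst)
        Prod.ωScottContinuous_snd
    · rintro i ⟨x, y⟩
      change k (c i x) (d i y) = _
      rw [hk']
      change M i (d i y) x = _
      rw [M_eq, A_eq i i i le_rfl le_rfl]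
      exact hcomp i i le_rfl (x, y)
    · rintro v ⟨hv, hv'⟩
      have v_y : ∀ z, ωScottContinuous fun b => v (z, b) := fun z =>
        hv.comp (Prod.ωScottContinuous.prodMk ωScottContinuous.const ωScottContinuous.id)
      have v_x : ∀ b, ωScottContinuous fun z => v (z, b) := fun b =>
        hv.comp (Prod.ωScottContinuous.prodMk ωScottContinuous.id ωScottContinuous.const)
      have key : (fun z => ContinuousHom.ofFun (fun b => v (z, b)) (v_y z)) = k := by
        refine hc.hom_ext (ωScottContinuous_curry v_x) hk fun i x => ?_
        rw [hk']
        refine ContinuousHom.ext _ _ fun b => ?_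
        refine congrFun (hd.hom_ext (v_y (c i x)) (M_cont' i x) fun j y => ?_) b
        rw [M_eq, A_eq i j _ (hl i j) (hr i j), ← hv', hc.compat, hd.compat]
      funext p
      rw [← key]
      rfl

/-- Over a nonempty directed poset, the `n`-th power of a colimit cocone is a colimit cocone. -/
theorem pow [IsDirected I (· ≤ ·)] [Nonempty I] (hc : IsColim D g C c)
    (hg : ∀ i j h, ωScottContinuous (g i j h))
    (hg_comp : ∀ i j k (h : i ≤ j) (h' : j ≤ k) (x : D i),
      g j k h' (g i j h x) = g i k (h.trans h') x) (n : ℕ) :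
    IsColim (fun i => Fin n → D i) (fun i j h x => g i j h ∘ x) (Fin n → C)
      (fun i x => c i ∘ x) := by
  have cont : ∀ n i, ωScottContinuous fun x : Fin n → D i => c i ∘ x := fun n i =>
    .of_apply₂ fun a => (hc.cont i).comp (ωScottContinuous.apply a)
  have g_cont : ∀ n i j h, ωScottContinuous fun x : Fin n → D i => g i j h ∘ x := fun n i j h =>
    .of_apply₂ fun a => (hg i j h).comp (ωScottContinuous.apply a)
  have compat : ∀ n i j (h : i ≤ j) (x : Fin n → D i), c j ∘ (g i j h ∘ x) = c i ∘ x :=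
    fun n i j h x => funext fun a => hc.compat i j h (x a)
  induction n with
  | zero =>
    -- the diagram is constant at a point, whose colimit is a point since `I` is connected
    refine ⟨cont 0, compat 0, fun X _ h hh hcomp => ?_⟩
    obtain ⟨i₀⟩ := ‹Nonempty I›
    refine ⟨fun _ => h i₀ Fin.elim0, ⟨ωScottContinuous.const, fun i x => ?_⟩, ?_⟩
    · obtain ⟨j, h1, h2⟩ := exists_ge_ge i₀ i
      change h i₀ Fin.elim0 = h i x
      rw [← hcomp i₀ j h1, ← hcomp i j h2]
      exact congrArg _ (Subsingleton.elim _ _)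
    · rintro v ⟨-, hv⟩
      funext z
      rw [← hv]
      exact congrArg _ (Subsingleton.elim _ _)
  | succ n ih =>
    have hP := hc.prod hg hg_comp ih (g_cont n)
      (fun i j k h h' x => funext fun a => hg_comp i j k h h' (x a))
    have cons_cont : ∀ (T : Type) [OmegaCompletePartialOrder T],
        ωScottContinuous fun p : T × (Fin n → T) => (Fin.cons p.1 p.2 : Fin (n + 1) → T) := by
      intro T _
      refine .of_apply₂ fun a => ?_
      refine Fin.cases ?_ (fun a => ?_) a
      · exact Prod.ωScottContinuous_fst
      · exact (ωScottContinuous.apply a).comp Prod.ωScottContinuous_snd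
    have split_cont : ωScottContinuous fun z : Fin (n + 1) → C => (z 0, Fin.tail z) :=
      Prod.ωScottContinuous.prodMk (ωScottContinuous.apply 0)
        (.of_apply₂ fun a => ωScottContinuous.apply a.succ)
    have comp_cons : ∀ {S T : Type} (f : S → T) (s : S) (t : Fin n → S),
        f ∘ (Fin.cons s t : Fin (n + 1) → S) = Fin.cons (f s) (f ∘ t) := by
      intro S T f s t
      funext a
      refine Fin.cases rfl (fun a => rfl) a
    refine ⟨cont _, compat _, fun X _ h hh hcomp => ?_⟩
    obtain ⟨k, ⟨hk, hk'⟩, -⟩ := hP.univ X (fun i p => h i (Fin.cons p.1 p.2))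
      (fun i => (hh i).comp (cons_cont (D i)))
      (fun i j hij p => by rw [← hcomp i j hij, comp_cons])
    refine ⟨fun z => k (z 0, Fin.tail z), ⟨hk.comp split_cont, fun i x => ?_⟩, ?_⟩
    · refine (hk' i (x 0, Fin.tail x)).trans ?_
      simp only [Fin.cons_self_tail]
    · rintro v ⟨hv, hv'⟩
      have key : (fun p : C × (Fin n → C) => v (Fin.cons p.1 p.2)) = k := by
        refine hP.hom_ext (hv.comp (cons_cont C)) hk fun i p => ?_
        rw [hk', ← hv', comp_cons]
      funext z
      rw [← key]
      simp only [Fin.cons_self_tail]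

end IsColim

/-- **The forgetful functor from continuous `Σ`-algebras to ω-cpos creates directed colimits
at the level of algebra structure:** given a directed diagram `(D_i)` of continuous
`Σ`-algebras with continuous homomorphisms as connecting maps and a colimit cocone
`(c_i : D_i → C)` in `ωCPO` of the underlying diagram of ω-cpos (expressed by its universal
property), there is a unique family of continuous operations on `C` making every `c_i` a
`Σ`-homomorphism. -/
theorem forgetful_creates_directed_colimits
    {Sg : ℕ → Type}
    {I : Type} [PartialOrder I] [IsDirected I (· ≤ ·)] [Nonempty I]
    (D : I → Type) [∀ i, OmegaCompletePartialOrder (D i)]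
    (alg : ∀ i, ContSigmaAlg Sg (D i))
    (g : ∀ i j, i ≤ j → D i → D j)
    (hg_hom : ∀ i j (h : i ≤ j), IsContHom (alg i) (alg j) (g i j h))
    (hg_id : ∀ i (x : D i), g i i le_rfl x = x)
    (hg_comp : ∀ i j k (h : i ≤ j) (h' : j ≤ k) (x : D i),
      g j k h' (g i j h x) = g i k (h.trans h') x)
    (C : Type) [OmegaCompletePartialOrder C]
    (c : ∀ i, D i → C)
    (hc_cont : ∀ i, OmegaContinuous (c i))
    (hc_compat : ∀ i j (h : i ≤ j) (x : D i), c j (g i j h x) = c i x)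
    -- `(c_i)` is a colimit cocone of the underlying diagram in the category `ωCPO`:
    (hc_colimit : ∀ (X : Type) (_ : OmegaCompletePartialOrder X) (h : ∀ i, D i → X),
      (∀ i, OmegaContinuous (h i)) → (∀ i j (hij : i ≤ j) (x : D i), h j (g i j hij x) = h i x) →
      ∃! k : C → X, OmegaContinuous k ∧ ∀ i, k ∘ c i = h i) :
    ∃! ops : ∀ n : ℕ, Sg n → (Fin n → C) → C,
      (∀ (n : ℕ) (σ : Sg n), OmegaContinuous (ops n σ)) ∧
      (∀ (i : I) (n : ℕ) (σ : Sg n) (x : Fin n → D i),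
        ops n σ (fun j => c i (x j)) = c i ((alg i).op σ x)) := by
  have hgc : ∀ i j h, ωScottContinuous (g i j h) := fun i j h =>
    omegaContinuous_iff.1 (hg_hom i j h).cont
  have hc : IsColim D g C c :=
    { cont := fun i => omegaContinuous_iff.1 (hc_cont i)
      compat := hc_compat
      univ := fun X _ h hh hcomp => by
        simpa only [omegaContinuous_iff, funext_iff, Function.comp_apply] using
          hc_colimit X inferInstance h (fun i => omegaContinuous_iff.2 (hh i)) hcomp }
  have key : ∀ (n : ℕ) (σ : Sg n), ∃! k : (Fin n → C) → C, ωScottContinuous k ∧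
      ∀ i (x : Fin n → D i), k (c i ∘ x) = c i ((alg i).op σ x) := fun n σ =>
    (hc.pow hgc hg_comp n).univ C (fun i x => c i ((alg i).op σ x))
      (fun i => (hc.cont i).comp (omegaContinuous_iff.1 ((alg i).op_cont σ)))
      (fun i j hij x => by rw [← (hg_hom i j hij).map_op, hc_compat])
  choose ops hops huniq using key
  refine ⟨ops, ⟨fun n σ => omegaContinuous_iff.2 (hops n σ).1,
    fun i n σ x => (hops n σ).2 i x⟩, ?_⟩
  rintro ops' ⟨h1, h2⟩
  funext n σ
  exact huniq n σ _ ⟨omegaContinuous_iff.1 (h1 n σ), fun i x => h2 i n σ x⟩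
end

section
/- The term algebra is the free continuous algebra: let Σ be a signature and M an ω-cpo. Then the set T_Σ M of Σ-terms with variables in M, equipped with the term order, is an ω-cpo and a continuous Σ-algebra, and it is free on M: for every continuous Σ-algebra A and every continuous map f : M → A there exists a unique continuous Σ-homomorphism f^♯ : T_Σ M → A with f^♯ restricted to the variables equal to f. -/
/-!
The term order relates only terms of the same shape: a term above `var x` is a variable, and a
term above `app σ t` is `app σ t'` with `t ≤ t'` componentwise. Hence a chain of terms is either
a chain of variables, coming from a chain in `M`, or has the form `app σ (ts k)` for one fixed `σ`
and a chain `ts` of tuples (`STerm.chain_eq_var`, `STerm.chain_eq_app`). By induction on the first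
term of the chain, joins of chains therefore exist and are computed leafwise
(`STerm.exists_isLUB`), so `var` and term formation preserve them (`STerm.var_ωSup`,
`STerm.app_ωSup`). The extension of `f : M → A` is given by structural recursion. It is the only
homomorphism extending `f`, and the same induction on the first term of a chain shows that it is
continuous (`STerm.lift_ωSup`).
-/

open OmegaCompletePartialOrder

universe u v w

/-- Ordinary `Σ`-terms with variables from `M`: the smallest set containing the variables
and closed under the operations `σ(t_0, …, t_{n-1})` of the signature. -/
inductive STerm (Sg : ℕ → Type u) (M : Type v) : Type (max u v)
  | var : M → STerm Sg M
  | app : ∀ {n : ℕ}, Sg n → (Fin n → STerm Sg M) → STerm Sg M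

/-- The term order on `STerm Sg M`: `t ⊑ t'` iff both are variables `x ≤ x'` of `M`, or
both are composite terms with the same head symbol and pairwise related subterms. -/
inductive TermLe {Sg : ℕ → Type u} {M : Type v} [Preorder M] :
    STerm Sg M → STerm Sg M → Prop
  | var {x y : M} : x ≤ y → TermLe (.var x) (.var y)
  | app {n : ℕ} (σ : Sg n) {t t' : Fin n → STerm Sg M} :
      (∀ i, TermLe (t i) (t' i)) → TermLe (.app σ t) (.app σ t')

namespace STerm

section Order

variable {Sg : ℕ → Type u} {M : Type v}

theorem termLe_var_left [Preorder M] {x : M} {u : STerm Sg M} (h : TermLe (.var x) u) :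
    ∃ y, u = .var y ∧ x ≤ y := by
  cases h with
  | var h => exact ⟨_, rfl, h⟩

theorem termLe_app_left [Preorder M] {n : ℕ} {σ : Sg n} {t : Fin n → STerm Sg M}
    {u : STerm Sg M} (h : TermLe (.app σ t) u) :
    ∃ t', u = .app σ t' ∧ ∀ i, TermLe (t i) (t' i) := by
  cases h with
  | app _ h => exact ⟨_, rfl, h⟩

/-- The term order, as a partial order on terms. -/
abbrev termPartialOrder [PartialOrder M] : PartialOrder (STerm Sg M) where
  le := TermLe
  le_refl t := by
    induction t with
    | var x => exact .var le_rfl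
    | app σ t ih => exact .app σ ih
  le_trans a b c hab := by
    induction hab generalizing c with
    | var h =>
      intro hbc
      obtain ⟨y, rfl, hy⟩ := termLe_var_left hbc
      exact .var (h.trans hy)
    | app σ _ ih =>
      intro hbc
      obtain ⟨t', rfl, ht⟩ := termLe_app_left hbc
      exact .app σ fun i => ih i _ (ht i)
  le_antisymm a b hab := by
    induction hab with
    | var h =>
      intro hba
      obtain ⟨y, hy, hle⟩ := termLe_var_left hba
      cases hy
      rw [le_antisymm h hle]
    | app σ _ ih =>
      intro hba
      obtain ⟨t', ht', hle⟩ := termLe_app_left hba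
      cases ht'
      exact congrArg (app σ) (funext fun i => ih i (hle i))

attribute [local instance] termPartialOrder

theorem var_le_var [PartialOrder M] {x y : M} :
    (var x : STerm Sg M) ≤ var y ↔ x ≤ y := by
  refine ⟨fun h => ?_, .var⟩
  obtain ⟨_, hz, hle⟩ := termLe_var_left h
  cases hz
  exact hle

theorem app_le_app [PartialOrder M] {n : ℕ} {σ : Sg n} {t t' : Fin n → STerm Sg M} :
    app σ t ≤ app σ t' ↔ t ≤ t' := by
  refine ⟨fun h => ?_, .app σ⟩
  obtain ⟨_, hz, hle⟩ := termLe_app_left h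
  cases hz
  exact hle

theorem var_mono [PartialOrder M] : Monotone (var : M → STerm Sg M) :=
  fun _ _ => var_le_var.2

theorem app_mono [PartialOrder M] {n : ℕ} (σ : Sg n) :
    Monotone (app σ : (Fin n → STerm Sg M) → STerm Sg M) :=
  fun _ _ => app_le_app.2

/-- A chain starting at a variable is the image of a chain in `M`. -/
theorem chain_eq_var [PartialOrder M] (c : Chain (STerm Sg M)) {x : M} (h0 : c 0 = var x) :
    ∃ m : Chain M, m 0 = x ∧ c = m.map ⟨var, var_mono⟩ := by
  have h : ∀ k, ∃ y, c k = var y := fun k => by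
    obtain ⟨y, hy, -⟩ := termLe_var_left (h0 ▸ c.monotone (Nat.zero_le k) : TermLe (var x) (c k))
    exact ⟨y, hy⟩
  choose m hm using h
  refine ⟨⟨m, fun i j hij => ?_⟩, ?_, ?_⟩
  · have : c i ≤ c j := c.monotone hij
    rwa [hm, hm, var_le_var] at this
  · have := (hm 0).symm.trans h0
    cases this
    rfl
  · apply Chain.ext
    exact funext hm

/-- A chain starting at a composite term keeps its head symbol, and its argument tuples form a
chain in the coordinatewise order. -/
theorem chain_eq_app [PartialOrder M] (c : Chain (STerm Sg M)) {n : ℕ} {σ : Sg n}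
    {t : Fin n → STerm Sg M} (h0 : c 0 = app σ t) :
    ∃ ts : Chain (Fin n → STerm Sg M), ts 0 = t ∧ c = ts.map ⟨app σ, app_mono σ⟩ := by
  have h : ∀ k, ∃ s, c k = app σ s := fun k => by
    obtain ⟨y, hy, -⟩ := termLe_app_left (h0 ▸ c.monotone (Nat.zero_le k) : TermLe (app σ t) (c k))
    exact ⟨y, hy⟩
  choose ts hts using h
  refine ⟨⟨ts, fun i j hij => ?_⟩, ?_, ?_⟩
  · have : c i ≤ c j := c.monotone hij
    rwa [hts, hts, app_le_app] at this
  · have := (hts 0).symm.trans h0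
    cases this
    rfl
  · apply Chain.ext
    exact funext hts

theorem isLUB_var [PartialOrder M] {m : Chain M} {x : M} (h : IsLUB (Set.range m) x) :
    IsLUB (Set.range (m.map ⟨(var : M → STerm Sg M), var_mono⟩)) (var x) := by
  constructor
  · rintro _ ⟨k, rfl⟩
    exact var_mono (h.1 ⟨k, rfl⟩)
  · intro u hu
    obtain ⟨y, rfl, -⟩ := termLe_var_left (hu ⟨0, rfl⟩)
    refine var_mono (h.2 ?_)
    rintro _ ⟨k, rfl⟩
    exact var_le_var.1 (hu ⟨k, rfl⟩)

theorem isLUB_app [PartialOrder M] {n : ℕ} (σ : Sg n) {ts : Chain (Fin n → STerm Sg M)}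
    {s : Fin n → STerm Sg M} (h : IsLUB (Set.range ts) s) :
    IsLUB (Set.range (ts.map ⟨app σ, app_mono σ⟩)) (app σ s) := by
  constructor
  · rintro _ ⟨k, rfl⟩
    exact app_mono σ (h.1 ⟨k, rfl⟩)
  · intro u hu
    obtain ⟨y, rfl, -⟩ := termLe_app_left (hu ⟨0, rfl⟩)
    refine app_mono σ (h.2 ?_)
    rintro _ ⟨k, rfl⟩
    exact app_le_app.1 (hu ⟨k, rfl⟩)

end Order

section Sup

attribute [local instance] termPartialOrder

variable {Sg : ℕ → Type u} {M : Type v} [OmegaCompletePartialOrder M]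

/-- Chains of terms have joins, by induction on the first term of the chain. -/
theorem exists_isLUB (c : Chain (STerm Sg M)) : ∃ s, IsLUB (Set.range c) s := by
  generalize h0 : c 0 = t
  induction t generalizing c with
  | var x =>
    obtain ⟨m, -, rfl⟩ := chain_eq_var c h0
    exact ⟨_, isLUB_var (isLUB_range_ωSup m)⟩
  | app σ t ih =>
    obtain ⟨ts, rfl, rfl⟩ := chain_eq_app c h0
    choose s hs using fun i => ih i (ts.map (Pi.evalOrderHom i)) rfl
    refine ⟨app σ s, isLUB_app σ (isLUB_pi.2 fun i => ?_)⟩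
    rw [← Set.range_comp]
    exact hs i

/-- The ω-cpo of terms. Joins of chains are chosen from their existence; by antisymmetry
they are determined by the term order. -/
noncomputable abbrev termOmegaCompletePartialOrder :
    OmegaCompletePartialOrder (STerm Sg M) where
  toPartialOrder := termPartialOrder
  ωSup c := (exists_isLUB c).choose
  le_ωSup c i := (exists_isLUB c).choose_spec.1 ⟨i, rfl⟩
  ωSup_le c x hx := (exists_isLUB c).choose_spec.2 (by rintro _ ⟨i, rfl⟩; exact hx i)

attribute [local instance] termOmegaCompletePartialOrder

theorem var_ωSup (m : Chain M) :
    (var (ωSup m) : STerm Sg M) = ωSup (m.map ⟨var, var_mono⟩) :=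
  (isLUB_var (isLUB_range_ωSup m)).unique (isLUB_range_ωSup _)

theorem app_ωSup {n : ℕ} (σ : Sg n) (ts : Chain (Fin n → STerm Sg M)) :
    app σ (ωSup ts) = ωSup (ts.map ⟨app σ, app_mono σ⟩) :=
  (isLUB_app σ (isLUB_range_ωSup ts)).unique (isLUB_range_ωSup _)

variable (Sg M) in
/-- The term algebra: term formation as a continuous `Σ`-algebra structure. -/
noncomputable def termAlg : ContSigmaAlg Sg (STerm Sg M) where
  op := app
  op_cont σ := ⟨app_mono σ, app_ωSup σ⟩

end Sup

section Lift

attribute [local instance] termOmegaCompletePartialOrder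

variable {Sg : ℕ → Type u} {M : Type v} {A : Type w} [OmegaCompletePartialOrder M]
  [OmegaCompletePartialOrder A] (alg : ContSigmaAlg Sg A) (f : M → A)

/-- The evaluation of terms in an algebra under an assignment `f` of the variables. -/
def lift : STerm Sg M → A
  | var x => f x
  | app σ ts => alg.op σ fun i => lift (ts i)

variable {f}

theorem lift_mono (hf : Monotone f) : Monotone (lift alg f) := by
  intro t t' h
  induction h with
  | var h => exact hf h
  | app σ _ ih => exact (alg.op_cont σ).1 ih

/-- Evaluation preserves joins of chains, by induction on the first term of the chain. -/
theorem lift_ωSup (hf : OmegaContinuous f) (c : Chain (STerm Sg M)) :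
    lift alg f (ωSup c) = ωSup (c.map ⟨lift alg f, lift_mono alg hf.1⟩) := by
  generalize h0 : c 0 = t
  induction t generalizing c with
  | var x =>
    obtain ⟨m, -, rfl⟩ := chain_eq_var c h0
    rw [← var_ωSup]
    exact hf.2 m
  | app σ t ih =>
    obtain ⟨ts, rfl, rfl⟩ := chain_eq_app c h0
    obtain ⟨hm, hσ⟩ := alg.op_cont σ
    rw [← app_ωSup]
    -- Joins in a power are computed coordinatewise, so the induction hypothesis applies to
    -- each coordinate of the chain of argument tuples.
    have key : (fun i => lift alg f (ωSup ts i)) =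
        ωSup (ts.map ⟨fun s i => lift alg f (s i),
          fun _ _ h i => lift_mono alg hf.1 (h i)⟩) :=
      funext fun i => ih i (ts.map (Pi.evalOrderHom i)) rfl
    exact (congrArg (alg.op σ) key).trans (hσ _)

end Lift

end STerm

/-- **The term algebra is the free continuous algebra:** for every ω-cpo `M`, the set
`T_Σ M` of terms carries an ω-cpo structure whose order is the term order, the term
formation operations make it a continuous `Σ`-algebra, and it is free on `M`: every
continuous map `f : M → A` into a continuous `Σ`-algebra extends uniquely to a continuous
`Σ`-homomorphism `f^♯ : T_Σ M → A` with `f^♯ ∘ var = f`. -/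
theorem term_algebra_is_free_continuous_algebra
    (Sg : ℕ → Type) (M : Type) [OmegaCompletePartialOrder M] :
    ∃ inst : OmegaCompletePartialOrder (STerm Sg M),
      (∀ t t' : STerm Sg M, t ≤ t' ↔ TermLe t t') ∧
      ∃ talg : ContSigmaAlg Sg (STerm Sg M),
        (∀ (n : ℕ) (σ : Sg n) (ts : Fin n → STerm Sg M), talg.op σ ts = STerm.app σ ts) ∧
        ∀ (A : Type) (instA : OmegaCompletePartialOrder A) (alg : ContSigmaAlg Sg A)
          (f : M → A), OmegaContinuous f →
          ∃! h : STerm Sg M → A,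
            OmegaContinuous h ∧
            (∀ (n : ℕ) (σ : Sg n) (ts : Fin n → STerm Sg M),
              h (STerm.app σ ts) = alg.op σ (h ∘ ts)) ∧
            (∀ x : M, h (STerm.var x) = f x) := by
  refine ⟨STerm.termOmegaCompletePartialOrder, fun _ _ => Iff.rfl, STerm.termAlg Sg M,
    fun _ _ _ => rfl, fun A _ alg f hf => ⟨STerm.lift alg f,
      ⟨⟨STerm.lift_mono alg hf.1, STerm.lift_ωSup alg hf⟩, fun _ _ _ => rfl, fun _ => rfl⟩, ?_⟩⟩
  rintro h ⟨-, happ, hvar⟩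
  funext t
  induction t with
  | var x => exact hvar x
  | app σ ts ih => exact (happ _ σ ts).trans (congrArg (alg.op σ) (funext ih))
end
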